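/- Let $y_1, y_2 > 0$ with $y_2 > 1$ and $h = \sqrt{y_1+y_2-y_1y_2} > 0$. For $r > 1$, $\lim_{r\downarrow 1}\frac{(1-y_2)h}{2\pi i}\oint_{|\xi|=1} \frac{(\xi+\frac{1}{hr})(\xi+\frac{h}{r})}{(\xi+\frac{y_2}{hr})(\xi+\frac{h}{y_2 r})}\cdot \frac{r}{(y_2 r \xi + h)^2}\,d\xi = -\frac{h^2 y_1 y_2}{(y_1+y_2)^3}$. -/

import Mathlib

open Real Complex Filter Topology

/-!
For `r` near `1`, the integrand has a triple pole at `-h / (y2 * r)` inside the unit circle and a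
simple pole at `-y2 / (h * r)` outside it, and it is `O(ξ⁻²)` at infinity. So the integral is `-2πi`
times the residue at the exterior simple pole, which spares the second derivative needed at the
triple pole. That residue does not depend on `r`: the function whose limit is taken is constant
near `r = 1`.
-/

lemma eval_div_sub_pow_eq_sum_taylor {K : Type*} [Field K] (P : Polynomial K) {n : ℕ}
    (hP : P.natDegree < n) {b x : K} (hx : x - b ≠ 0) :
    P.eval x / (x - b) ^ n =
      ∑ k ∈ Finset.range n, (Polynomial.taylor b P).coeff k * ((x - b) ^ (n - k))⁻¹ := by
  rw [← Polynomial.taylor_eval_sub b,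
    Polynomial.eval_eq_sum_range' (by rwa [Polynomial.natDegree_taylor]), Finset.sum_div]
  refine Finset.sum_congr rfl fun k hk => ?_
  rw [pow_sub₀ _ hx (Finset.mem_range.mp hk).le]
  field_simp

section ExteriorPole

variable {z b c : ℂ} {R : ℝ}

lemma circleIntegral_inv_sub_of_notMem_closedBall (hR : 0 ≤ R) (hc : c ∉ Metric.closedBall z R) :
    ∮ ξ in C(z, R), (ξ - c)⁻¹ = 0 := by
  have hdiff : DifferentiableOn ℂ (fun ξ => (ξ - c)⁻¹) (Metric.closedBall z R) :=
    (differentiableOn_id.sub_const c).inv fun _ hξ =>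
      sub_ne_zero.mpr (ne_of_mem_of_not_mem hξ hc)
  exact (hdiff.diffContOnCl_ball subset_rfl).circleIntegral_eq_zero hR

lemma circleIntegrable_inv_sub_pow (hb : b ∈ Metric.ball z R) (n : ℕ) :
    CircleIntegrable (fun ξ => ((ξ - b) ^ n)⁻¹) z R := by
  refine ContinuousOn.circleIntegrable (Metric.nonempty_ball.mp ⟨b, hb⟩).le ?_
  exact (by fun_prop : Continuous fun ξ : ℂ => (ξ - b) ^ n).continuousOn.inv₀ fun ξ hξ =>
    pow_ne_zero n (sub_ne_zero.mpr (Metric.sphere_disjoint_ball.ne_of_mem hξ hb))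

lemma circleIntegrable_inv_sub_pow_mul_sub (hb : b ∈ Metric.ball z R)
    (hc : c ∉ Metric.closedBall z R) (n : ℕ) :
    CircleIntegrable (fun ξ => ((ξ - b) ^ n * (ξ - c))⁻¹) z R := by
  refine ContinuousOn.circleIntegrable (Metric.nonempty_ball.mp ⟨b, hb⟩).le ?_
  exact (by fun_prop : Continuous fun ξ : ℂ => (ξ - b) ^ n * (ξ - c)).continuousOn.inv₀ fun ξ hξ =>
    mul_ne_zero (pow_ne_zero n (sub_ne_zero.mpr (Metric.sphere_disjoint_ball.ne_of_mem hξ hb)))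
      (sub_ne_zero.mpr (ne_of_mem_of_not_mem (Metric.sphere_subset_closedBall hξ) hc))

lemma circleIntegral_inv_sub_pow_succ_mul_sub_eq (hb : b ∈ Metric.ball z R)
    (hc : c ∉ Metric.closedBall z R) (n : ℕ) :
    ∮ ξ in C(z, R), ((ξ - b) ^ (n + 1) * (ξ - c))⁻¹ =
      (c - b)⁻¹ * ((∮ ξ in C(z, R), ((ξ - b) ^ n * (ξ - c))⁻¹) -
        ∮ ξ in C(z, R), ((ξ - b) ^ (n + 1))⁻¹) := by
  have hR : 0 ≤ R := (Metric.nonempty_ball.mp ⟨b, hb⟩).le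
  have hcb : c - b ≠ 0 :=
    sub_ne_zero.mpr (ne_of_mem_of_not_mem (Metric.ball_subset_closedBall hb) hc).symm
  rw [← circleIntegral.integral_sub (circleIntegrable_inv_sub_pow_mul_sub hb hc n)
      (circleIntegrable_inv_sub_pow hb (n + 1)), ← circleIntegral.integral_const_mul]
  refine circleIntegral.integral_congr hR fun ξ hξ => ?_
  have hξb : ξ - b ≠ 0 := sub_ne_zero.mpr (Metric.sphere_disjoint_ball.ne_of_mem hξ hb)
  have hξc : ξ - c ≠ 0 :=
    sub_ne_zero.mpr (ne_of_mem_of_not_mem (Metric.sphere_subset_closedBall hξ) hc)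
  field_simp
  ring

lemma circleIntegral_inv_sub_pow_mul_sub (hb : b ∈ Metric.ball z R)
    (hc : c ∉ Metric.closedBall z R) {n : ℕ} (hn : 1 ≤ n) :
    ∮ ξ in C(z, R), ((ξ - b) ^ n * (ξ - c))⁻¹ = -(2 * π * I) / (c - b) ^ n := by
  induction n, hn using Nat.le_induction with
  | base =>
    have hR : 0 ≤ R := (Metric.nonempty_ball.mp ⟨b, hb⟩).le
    rw [circleIntegral_inv_sub_pow_succ_mul_sub_eq hb hc 0]
    simp only [pow_zero, one_mul, zero_add, pow_one,
      circleIntegral_inv_sub_of_notMem_closedBall hR hc,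
      circleIntegral.integral_sub_inv_of_mem_ball hb]
    ring
  | succ n hn ih =>
    have hpow : ∮ ξ in C(z, R), ((ξ - b) ^ (n + 1))⁻¹ = 0 := by
      simpa only [zpow_neg, zpow_natCast] using
        circleIntegral.integral_sub_zpow_of_ne (n := -((n + 1 : ℕ) : ℤ)) (by lia) z b R
    rw [circleIntegral_inv_sub_pow_succ_mul_sub_eq hb hc n, hpow, ih, sub_zero, pow_succ]
    field_simp

/-- The degree bound makes the integrand `O(ξ⁻²)` at infinity, so that there is no residue there. -/
theorem circleIntegral_eval_div_sub_pow_mul_sub (P : Polynomial ℂ) {n : ℕ} (hP : P.natDegree < n)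
    (hb : b ∈ Metric.ball z R) (hc : c ∉ Metric.closedBall z R) :
    ∮ ξ in C(z, R), P.eval ξ / ((ξ - b) ^ n * (ξ - c)) =
      -(2 * π * I) * (P.eval c / (c - b) ^ n) := by
  have hR : 0 ≤ R := (Metric.nonempty_ball.mp ⟨b, hb⟩).le
  have hcb : c - b ≠ 0 :=
    sub_ne_zero.mpr (ne_of_mem_of_not_mem (Metric.ball_subset_closedBall hb) hc).symm
  set a : ℕ → ℂ := (Polynomial.taylor b P).coeff
  have partial_fractions : Set.EqOn (fun ξ => P.eval ξ / ((ξ - b) ^ n * (ξ - c)))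
      (fun ξ => ∑ k ∈ Finset.range n, a k * ((ξ - b) ^ (n - k) * (ξ - c))⁻¹)
      (Metric.sphere z R) := fun ξ hξ => by
    have hξb : ξ - b ≠ 0 := sub_ne_zero.mpr (Metric.sphere_disjoint_ball.ne_of_mem hξ hb)
    simp only [a, ← div_div, eval_div_sub_pow_eq_sum_taylor P hP hξb, div_eq_mul_inv _ (ξ - c),
      Finset.sum_mul, mul_inv, mul_assoc]
  have term_integrable (k : ℕ) :
      CircleIntegrable (fun ξ => a k * ((ξ - b) ^ (n - k) * (ξ - c))⁻¹) z R :=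
    (circleIntegrable_inv_sub_pow_mul_sub hb hc (n - k)).const_smul
  rw [circleIntegral.integral_congr hR partial_fractions,
    circleIntegral.integral_fun_sum fun k _ => term_integrable k,
    eval_div_sub_pow_eq_sum_taylor P hP hcb, Finset.mul_sum]
  refine Finset.sum_congr rfl fun k hk => ?_
  have hk : 1 ≤ n - k := Nat.sub_pos_of_lt (Finset.mem_range.mp hk)
  rw [circleIntegral.integral_const_mul, circleIntegral_inv_sub_pow_mul_sub hb hc hk]
  ring

end ExteriorPole

section CumulantFactor

/-- The integrand `z / (α + z) * dm₃ / (m₃ + 1)²` of the contour factor in the fourth-cumulant part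
of the variance, in the variable `ξ` and without the constant `(1 - y2) * h`. -/
noncomputable def cumulantIntegrand (y2 h r ξ : ℂ) : ℂ :=
  ((ξ + 1 / (h * r)) * (ξ + h / r)) / ((ξ + y2 / (h * r)) * (ξ + h / (y2 * r))) *
    (r / (y2 * r * ξ + h) ^ 2)

variable {y1 y2 h r : ℂ}

lemma cumulantIntegrand_eq (hy2 : y2 ≠ 0) (hr : r ≠ 0) (ξ : ℂ) :
    cumulantIntegrand y2 h r ξ = 1 / (y2 ^ 2 * r) * ((ξ + 1 / (h * r)) * (ξ + h / r) /
      ((ξ - -(h / (y2 * r))) ^ 3 * (ξ - -(y2 / (h * r))))) := by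
  have hfactor : y2 * r * ξ + h = y2 * r * (ξ + h / (y2 * r)) := by field_simp
  rw [cumulantIntegrand, hfactor, sub_neg_eq_add, sub_neg_eq_add]
  generalize ξ + h / (y2 * r) = u
  generalize ξ + y2 / (h * r) = v
  field_simp

theorem circleIntegral_cumulantIntegrand (hh : h ≠ 0) (hin : ‖h‖ < ‖y2 * r‖)
    (hout : ‖h * r‖ < ‖y2‖) :
    ∮ ξ in C(0, 1), cumulantIntegrand y2 h r ξ =
      2 * π * I * (h * y2 * (1 - y2) * (h ^ 2 - y2) / (y2 ^ 2 - h ^ 2) ^ 3) := by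
  have hyr : y2 * r ≠ 0 := norm_pos_iff.mp ((norm_nonneg h).trans_lt hin)
  obtain ⟨hy2, hr⟩ := mul_ne_zero_iff.mp hyr
  have hb : -(h / (y2 * r)) ∈ Metric.ball (0 : ℂ) 1 := by
    rwa [mem_ball_zero_iff, norm_neg, norm_div, div_lt_one (norm_pos_iff.mpr hyr)]
  have hc : -(y2 / (h * r)) ∉ Metric.closedBall (0 : ℂ) 1 := by
    rwa [mem_closedBall_zero_iff, norm_neg, norm_div, not_le,
      one_lt_div (norm_pos_iff.mpr (mul_ne_zero hh hr))]
  let P : Polynomial ℂ := (.X + .C (1 / (h * r))) * (.X + .C (h / r))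
  have hP : P.natDegree < 3 :=
    Nat.lt_succ_of_le (by simp only [P]; compute_degree)
  have eval_P (ξ : ℂ) : P.eval ξ = (ξ + 1 / (h * r)) * (ξ + h / r) := by
    simp only [P, Polynomial.eval_mul, Polynomial.eval_add, Polynomial.eval_X, Polynomial.eval_C]
  have eval_pole : P.eval (-(y2 / (h * r))) = (1 - y2) * (h ^ 2 - y2) / (h * r) ^ 2 := by
    rw [eval_P]
    field_simp
    ring
  have pole_sub_pole : -(y2 / (h * r)) - -(h / (y2 * r)) = -((y2 ^ 2 - h ^ 2) / (h * y2 * r)) := by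
    field_simp
    ring
  simp only [cumulantIntegrand_eq hy2 hr, ← eval_P]
  rw [circleIntegral.integral_const_mul, circleIntegral_eval_div_sub_pow_mul_sub P hP hb hc,
    eval_pole, pole_sub_pole]
  generalize y2 ^ 2 - h ^ 2 = d
  field_simp

lemma residue_eq_of_sq_eq (hsq : h ^ 2 = y1 + y2 - y1 * y2) (hy2 : 1 - y2 ≠ 0) :
    (1 - y2) * h * (h * y2 * (1 - y2) * (h ^ 2 - y2) / (y2 ^ 2 - h ^ 2) ^ 3) =
      -(h ^ 2 * y1 * y2 / (y1 + y2) ^ 3) := by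
  have hnum : h ^ 2 - y2 = (1 - y2) * y1 := by linear_combination hsq
  have hden : y2 ^ 2 - h ^ 2 = -((1 - y2) * (y1 + y2)) := by linear_combination -hsq
  rw [hnum, hden]
  generalize y1 + y2 = s
  field_simp

lemma one_sub_ne_zero_of_sq_eq (hlt : ‖h‖ < ‖y2‖) (hsq : h ^ 2 = y1 + y2 - y1 * y2) :
    1 - y2 ≠ 0 := by
  intro hy2
  have hsq_eq : h ^ 2 = y2 ^ 2 := by linear_combination hsq + (y1 + y2) * hy2
  obtain rfl | rfl := sq_eq_sq_iff_eq_or_eq_neg.mp hsq_eq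
  · exact hlt.false
  · exact hlt.ne (norm_neg y2)

theorem stmt_13_general (hh : h ≠ 0) (hlt : ‖h‖ < ‖y2‖) (hsq : h ^ 2 = y1 + y2 - y1 * y2) :
    Tendsto (fun r => (1 - y2) * h / (2 * π * I) * ∮ ξ in C(0, 1), cumulantIntegrand y2 h r ξ)
      (𝓝 1) (𝓝 (-(h ^ 2 * y1 * y2 / (y1 + y2) ^ 3))) := by
  have hin : ∀ᶠ r in 𝓝 (1 : ℂ), ‖h‖ < ‖y2 * r‖ :=
    Tendsto.eventually_const_lt (by simpa using hlt)
      (by fun_prop : Continuous fun r : ℂ => ‖y2 * r‖).continuousAt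
  have hout : ∀ᶠ r in 𝓝 (1 : ℂ), ‖h * r‖ < ‖y2‖ :=
    Tendsto.eventually_lt_const (by simpa using hlt)
      (by fun_prop : Continuous fun r : ℂ => ‖h * r‖).continuousAt
  refine tendsto_const_nhds.congr' ?_
  filter_upwards [hin, hout] with r hin hout
  rw [circleIntegral_cumulantIntegrand hh hin hout,
    ← residue_eq_of_sq_eq hsq (one_sub_ne_zero_of_sq_eq hlt hsq)]
  field_simp [two_pi_I_ne_zero]

end CumulantFactor

lemma abs_lt_abs_of_sq_eq {y1 y2 h : ℝ} (hsum : 0 < y1 + y2) (hy2 : 1 < y2)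
    (hsq : h ^ 2 = y1 + y2 - y1 * y2) : |h| < |y2| := by
  rw [← sq_lt_sq]
  linear_combination hsq + mul_pos hsum (sub_pos.mpr hy2)

theorem stmt_13 (y1 y2 h : ℝ) (hy1 : 0 < y1) (hy2 : 1 < y2) (hh : 0 < h)
    (hh2 : h ^ 2 = y1 + y2 - y1 * y2) :
    Filter.Tendsto
      (fun r : ℝ =>
        ((1 - (y2 : ℂ)) * (h : ℂ) / (2 * (π : ℂ) * Complex.I)) *
          ∮ ξ in C(0, 1),
            ((ξ + 1 / ((h : ℂ) * r)) * (ξ + (h : ℂ) / r)) /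
                ((ξ + (y2 : ℂ) / ((h : ℂ) * r)) * (ξ + (h : ℂ) / ((y2 : ℂ) * r))) *
              ((r : ℂ) / ((y2 : ℂ) * r * ξ + (h : ℂ)) ^ 2))
      (𝓝[>] (1 : ℝ))
      (𝓝 (-((h : ℂ) ^ 2 * (y1 : ℂ) * (y2 : ℂ) / ((y1 : ℂ) + (y2 : ℂ)) ^ 3))) := by
  have hlt : ‖(h : ℂ)‖ < ‖(y2 : ℂ)‖ := by
    simpa only [norm_real, Real.norm_eq_abs] using abs_lt_abs_of_sq_eq (by linarith) hy2 hh2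
  have hr : Tendsto ((↑) : ℝ → ℂ) (𝓝[>] 1) (𝓝 1) :=
    (continuous_ofReal.tendsto' 1 1 ofReal_one).mono_left nhdsWithin_le_nhds
  exact (stmt_13_general (mod_cast hh.ne') hlt (mod_cast hh2)).comp hr
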